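/- Let T be a standard tableau of shifted shape λ with N boxes, and for each k let b_k denote the box of T containing the entry k. Then for every 1 ≤ k ≤ N−2, if res(b_k) = res(b_{k+2}), then res(b_k) = res(b_{k+2}) = 1 and res(b_{k+1}) = 2. -/

import Mathlib

/-!
STATEMENT 19: In a standard tableau of shifted shape, if the entries k and k+2 occupy
boxes of equal residue, then this common residue is 1 and the box of k+1 has residue 2.
-/

/-- The shifted Young diagram of a strict partition `l = (λ₁ > λ₂ > ⋯)`. -/
def shiftedDiagram (l : List ℕ) : Set (ℕ × ℕ) :=
  {b | b.1 - 1 < l.length ∧ 1 ≤ b.1 ∧ b.1 ≤ b.2 ∧ b.2 + 1 ≤ l.getD (b.1 - 1) 0 + b.1}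

/-- The residue `res(i,j) = j - i + 1` of a box. -/
def resBox (b : ℕ × ℕ) : ℕ := b.2 + 1 - b.1

/-- `f : Fin N → ℕ × ℕ` is a standard tableau of shifted shape `l` (entry `k+1` in box `f k`). -/
def IsStandardTableau (l : List ℕ) (N : ℕ) (f : Fin N → ℕ × ℕ) : Prop :=
  Function.Injective f ∧ Set.range f = shiftedDiagram l ∧
    (∀ a b : Fin N, (f a).1 = (f b).1 → (f a).2 < (f b).2 → a < b) ∧
    (∀ a b : Fin N, (f a).2 = (f b).2 → (f a).1 < (f b).1 → a < b)

theorem shifted_getD (l : List ℕ) (hdec : l.IsChain (· > ·)) (a d : ℕ) (h : a + d < l.length) :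
    l.getD (a + d) 0 + d ≤ l.getD a 0 := by
  induction d with
  | zero => simp
  | succ d ih =>
    have h1 := ih (by omega)
    have h2 := List.isChain_iff_getElem.1 hdec (a + d) (by omega)
    rw [List.getD_eq_getElem _ _ (by omega)] at h1 ⊢
    have h3 : l[a + (d + 1)] < l[a + d] := h2
    omega

theorem shifted_mem (l : List ℕ) (hdec : l.IsChain (· > ·)) (i j i' j' : ℕ)
    (h : (i', j') ∈ shiftedDiagram l) (h1 : 1 ≤ i) (hi : i ≤ i') (hij : i ≤ j) (hj : j ≤ j') :
    (i, j) ∈ shiftedDiagram l := by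
  simp only [shiftedDiagram, Set.mem_setOf_eq] at h ⊢
  have := shifted_getD l hdec (i - 1) (i' - i) (by omega)
  rw [show i - 1 + (i' - i) = i' - 1 by omega] at this
  omega

theorem shifted_mono (l : List ℕ) (hdec : l.IsChain (· > ·)) (N : ℕ) (f : Fin N → ℕ × ℕ)
    (hf : IsStandardTableau l N f) (a b : Fin N) (h1 : (f a).1 ≤ (f b).1)
    (h2 : (f a).2 ≤ (f b).2) : a ≤ b := by
  obtain ⟨hinj, hr, hrow, hcol⟩ := hf
  have ha : f a ∈ shiftedDiagram l := hr ▸ ⟨a, rfl⟩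
  have hb : f b ∈ shiftedDiagram l := hr ▸ ⟨b, rfl⟩
  have hc : ((f a).1, (f b).2) ∈ shiftedDiagram l :=
    shifted_mem l hdec _ _ (f b).1 (f b).2 hb ha.2.1 h1 (ha.2.2.1.trans h2) le_rfl
  rw [← hr] at hc
  obtain ⟨c, hc⟩ := hc
  have hc1 : (f c).1 = (f a).1 := by rw [hc]
  have hc2 : (f c).2 = (f b).2 := by rw [hc]
  have hac : a ≤ c := by
    rcases h2.lt_or_eq with h | h
    · exact (hrow a c hc1.symm (by omega)).le
    · exact (hinj (Prod.ext hc1.symm (by omega))).le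
  have hcb : c ≤ b := by
    rcases h1.lt_or_eq with h | h
    · exact (hcol c b hc2 (by omega)).le
    · exact (hinj (Prod.ext (by omega) hc2)).le
  exact hac.trans hcb

theorem residue_pattern_of_eq_two_apart
    (l : List ℕ) (hdec : l.Chain' (· > ·)) (hpos : ∀ x ∈ l, 0 < x)
    (N : ℕ) (f : Fin N → ℕ × ℕ) (hf : IsStandardTableau l N f)
    (kk : ℕ) (hk : kk + 2 < N)
    (heq : resBox (f ⟨kk, by omega⟩) = resBox (f ⟨kk + 2, hk⟩)) :
    resBox (f ⟨kk, by omega⟩) = 1 ∧ resBox (f ⟨kk + 2, hk⟩) = 1 ∧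
      resBox (f ⟨kk + 1, by omega⟩) = 2 := by
  have hmono := shifted_mono l hdec N f hf
  obtain ⟨hinj, hr, -, -⟩ := hf
  have hA : f ⟨kk, by omega⟩ ∈ shiftedDiagram l := hr ▸ ⟨_, rfl⟩
  have hB : f ⟨kk + 2, hk⟩ ∈ shiftedDiagram l := hr ▸ ⟨_, rfl⟩
  have hA1 := hA.2.1
  have hA2 := hA.2.2.1
  have hB2 := hB.2.2.1
  have hlt : (f ⟨kk, by omega⟩).1 < (f ⟨kk + 2, hk⟩).1 := by
    by_contra hcon
    have := hmono ⟨kk + 2, hk⟩ ⟨kk, by omega⟩ (by omega) (by simp only [resBox] at heq; omega)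
    simp at this
  -- any box strictly between the two boxes holds the middle entry
  have key : ∀ i j, (f ⟨kk, by omega⟩).1 ≤ i → (f ⟨kk, by omega⟩).2 ≤ j →
      i ≤ (f ⟨kk + 2, hk⟩).1 → j ≤ (f ⟨kk + 2, hk⟩).2 → i ≤ j →
      resBox (i, j) ≠ resBox (f ⟨kk, by omega⟩) → f ⟨kk + 1, by omega⟩ = (i, j) := by
    intro i j h1 h2 h3 h4 h5 h6
    have hm := shifted_mem l hdec i j _ _ hB (by omega) h3 h5 h4
    rw [← hr] at hm
    obtain ⟨c, hc⟩ := hm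
    have hc1 := hmono ⟨kk, by omega⟩ c (by rw [hc]; exact h1) (by rw [hc]; exact h2)
    have hc2 := hmono c ⟨kk + 2, hk⟩ (by rw [hc]; exact h3) (by rw [hc]; exact h4)
    have hn1 : c ≠ ⟨kk, by omega⟩ := by
      intro e
      exact h6 (by rw [← hc, e])
    have hn2 : c ≠ ⟨kk + 2, hk⟩ := by
      intro e
      exact h6 (by rw [heq, ← hc, e])
    have : c = ⟨kk + 1, by omega⟩ := by
      rw [Fin.le_def] at hc1 hc2
      rw [ne_eq, Fin.ext_iff] at hn1 hn2
      rw [Fin.ext_iff]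
      simp only at hc1 hc2 hn1 hn2 ⊢
      omega
    rw [← this, hc]
  simp only [resBox] at heq key ⊢
  have hX := key (f ⟨kk, by omega⟩).1 ((f ⟨kk, by omega⟩).2 + 1) le_rfl (by omega) (by omega)
    (by omega) (by omega) (by omega)
  have hd : (f ⟨kk, by omega⟩).2 = (f ⟨kk, by omega⟩).1 := by
    by_contra hne
    have hY := key ((f ⟨kk, by omega⟩).1 + 1) (f ⟨kk, by omega⟩).2 (by omega) le_rfl (by omega)
      (by omega) (by omega) (by omega)
    rw [hX] at hY
    have := congrArg Prod.fst hY
    simp at this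
  rw [hX]
  simp only
  omega
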